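/- arXiv:1907.09667 — 2 statements merged into one kernel-verified Lean document; each statement's English description precedes it below -/
import Mathlib

section
/- Let g ≥ 1 be an integer and let B be a complex g × g matrix whose real part Re B is negative definite as a quadratic form on ℝ^g. Then the function z ↦ θ(z,B) = Σ_{n ∈ ℤ^g} exp((1/2) n·Bn + n·z) is analytic (holomorphic) on all of ℂ^g; in particular the defining series converges uniformly on compact subsets of ℂ^g. -/
open Filter

/-- The general term of the Riemann theta series. -/
noncomputable def thetaTerm {g : ℕ} (B : Matrix (Fin g) (Fin g) ℂ)
    (n : Fin g → ℤ) (z : Fin g → ℂ) : ℂ :=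
  Complex.exp ((1 / 2) * (∑ i, ∑ j, (n i : ℂ) * B i j * (n j : ℂ))
    + ∑ i, (n i : ℂ) * z i)

/-- The Riemann theta function `θ(z, B) = Σ_{n ∈ ℤ^g} exp((1/2) n·Bn + n·z)`. -/
noncomputable def riemannTheta {g : ℕ} (B : Matrix (Fin g) (Fin g) ℂ)
    (z : Fin g → ℂ) : ℂ :=
  ∑' n : Fin g → ℤ, thetaTerm B n z

/-!
For every `r > 0` the `k`-th Taylor coefficient of `z ↦ exp (n·z)` at the origin has norm at most
`exp (r ‖n‖₁) / r ^ k`. Negative definiteness of `Re B` makes `|exp (n·Bn / 2)|` decay like a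
Gaussian in `n`, so its product with `exp (r ‖n‖₁)` is summable for every `r`. The double series
over `n ∈ ℤ^g` and the degree `k` is therefore absolutely convergent for `‖z‖ < r`, so `θ` is the
sum of a power series at the origin with infinite radius of convergence; the same majorant gives
uniform convergence on bounded sets by the Weierstrass M-test.
-/

section PowerSeries

variable {ι 𝕜 E F : Type*} [NontriviallyNormedField 𝕜] [NormedAddCommGroup E] [NormedSpace 𝕜 E]
  [NormedAddCommGroup F] [NormedSpace 𝕜 F]
  {p : ι → FormalMultilinearSeries 𝕜 E F} {r : NNReal} {u : ι → ℝ}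

lemma le_radius_tsum_of_norm_mul_pow_le (hr : 0 < r) (hu : Summable u)
    (hp : ∀ n k, ‖p n k‖ * r ^ k ≤ u n) :
    r ≤ FormalMultilinearSeries.radius fun k => ∑' n, p n k := by
  refine FormalMultilinearSeries.le_radius_of_bound _ (∑' n, u n) fun k => ?_
  have hrk : 0 < (r : ℝ) ^ k := pow_pos (NNReal.coe_pos.2 hr) k
  rw [← le_div_iff₀ hrk]
  exact tsum_of_norm_bounded (hu.hasSum.div_const _) fun n => (le_div_iff₀ hrk).2 (hp n k)

variable [CompleteSpace F]

lemma summable_coeff_of_norm_mul_pow_le (hr : 0 < r) (hu : Summable u)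
    (hp : ∀ n k, ‖p n k‖ * r ^ k ≤ u n) (k : ℕ) : Summable fun n => p n k :=
  (hu.div_const ((r : ℝ) ^ k)).of_norm_bounded fun n =>
    (le_div_iff₀ (pow_pos (NNReal.coe_pos.2 hr) k)).2 (hp n k)

lemma summable_prod_apply_of_norm_mul_pow_le (hu : Summable u)
    (hp : ∀ n k, ‖p n k‖ * r ^ k ≤ u n) {y : E} (hy : ‖y‖ < r) :
    Summable fun x : ι × ℕ => p x.1 x.2 fun _ => y := by
  have hr : 0 < (r : ℝ) := (norm_nonneg y).trans_lt hy
  have hu_nonneg : 0 ≤ u := fun n => (by positivity : 0 ≤ ‖p n 0‖ * (r : ℝ) ^ 0).trans (hp n 0)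
  have h_geom : Summable fun k : ℕ => (‖y‖ / r) ^ k :=
    summable_geometric_of_lt_one (by positivity) ((div_lt_one hr).2 hy)
  refine (hu.mul_of_nonneg h_geom hu_nonneg fun k => by positivity).of_norm_bounded ?_
  rintro ⟨n, k⟩
  calc ‖p n k fun _ => y‖ ≤ ‖p n k‖ * ‖y‖ ^ k :=
        (p n k).le_opNorm_mul_pow_of_le (pi_norm_const_le y)
    _ = ‖p n k‖ * r ^ k * (‖y‖ / r) ^ k := by
        rw [mul_assoc, ← mul_pow, mul_div_cancel₀ _ hr.ne']
    _ ≤ u n * (‖y‖ / r) ^ k := by gcongr; exact hp n k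

theorem hasFPowerSeriesOnBall_tsum {f : ι → E → F} {x : E} (hr : 0 < r)
    (hf : ∀ n, HasFPowerSeriesOnBall (f n) (p n) x r) (hu : Summable u)
    (hp : ∀ n k, ‖p n k‖ * r ^ k ≤ u n) :
    HasFPowerSeriesOnBall (fun z => ∑' n, f n z) (fun k => ∑' n, p n k) x r where
  r_le := le_radius_tsum_of_norm_mul_pow_le hr hu hp
  r_pos := ENNReal.coe_pos.2 hr
  hasSum {y} hy := by
    have hy_lt : ‖y‖ < r := by simpa using hy
    have h_double := (summable_prod_apply_of_norm_mul_pow_le hu hp hy_lt).hasSum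
    have h_rows := h_double.prod_fiberwise fun n => (hf n).hasSum hy
    have h_column (k : ℕ) : HasSum (fun n => p n k fun _ => y) ((∑' n, p n k) fun _ => y) :=
      (summable_coeff_of_norm_mul_pow_le hr hu hp k).hasSum.mapL
        (ContinuousMultilinearMap.apply 𝕜 (fun _ : Fin k => E) F fun _ => y)
    rw [h_rows.tsum_eq]
    exact ((Equiv.prodComm ℕ ι).hasSum_iff.2 h_double).prod_fiberwise h_column

end PowerSeries

section ExponentialSeries

variable {ι E F : Type*} [NormedAddCommGroup E] [NormedSpace ℂ E]
  [NormedAddCommGroup F] [NormedSpace ℂ F]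

/-- The Taylor series at the origin of `z ↦ exp (L z) • c`. -/
noncomputable def expSMulSeries (L : E →L[ℂ] ℂ) (c : F) : FormalMultilinearSeries ℂ E F :=
  (ContinuousLinearMap.toSpanSingleton ℂ c).compFormalMultilinearSeries
    ((NormedSpace.expSeries ℂ ℂ).compContinuousLinearMap L)

lemma hasFPowerSeriesOnBall_exp_smul (L : E →L[ℂ] ℂ) (c : F) :
    HasFPowerSeriesOnBall (fun z => Complex.exp (L z) • c) (expSMulSeries L c) 0 ⊤ := by
  have h_exp : HasFPowerSeriesOnBall Complex.exp (NormedSpace.expSeries ℂ ℂ) (L 0) ⊤ := by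
    rw [map_zero, Complex.exp_eq_exp_ℂ]
    exact NormedSpace.exp_hasFPowerSeriesOnBall
  have h_comp := h_exp.compContinuousLinearMap
  rw [ENNReal.top_div_of_ne_top enorm_ne_top] at h_comp
  exact (ContinuousLinearMap.toSpanSingleton ℂ c).comp_hasFPowerSeriesOnBall h_comp

lemma norm_expSMulSeries_mul_pow_le (L : E →L[ℂ] ℂ) (c : F) (r : NNReal) (k : ℕ) :
    ‖expSMulSeries L c k‖ * r ^ k ≤ Real.exp (r * ‖L‖) * ‖c‖ := by
  have h_expSeries : ‖NormedSpace.expSeries ℂ ℂ k‖ = (k.factorial : ℝ)⁻¹ := by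
    simp [NormedSpace.expSeries, norm_smul]
  have h_smul : ‖expSMulSeries L c k‖ ≤ ‖c‖ * ((k.factorial : ℝ)⁻¹ * ‖L‖ ^ k) := by
    rw [← h_expSeries, ← ContinuousLinearMap.norm_toSpanSingleton (𝕜 := ℂ) c]
    refine (ContinuousLinearMap.norm_compContinuousMultilinearMap_le _ _).trans ?_
    gcongr
    exact FormalMultilinearSeries.norm_compContinuousLinearMap_le _ L k
  calc ‖expSMulSeries L c k‖ * r ^ k
      ≤ ‖c‖ * ((k.factorial : ℝ)⁻¹ * ‖L‖ ^ k) * r ^ k := by gcongr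
    _ = (r * ‖L‖) ^ k / k.factorial * ‖c‖ := by ring
    _ ≤ Real.exp (r * ‖L‖) * ‖c‖ := by
        gcongr
        exact Real.pow_div_factorial_le_exp _ (by positivity) k

lemma norm_exp_smul_le (L : E →L[ℂ] ℂ) (c : F) {r : ℝ} {z : E} (hz : ‖z‖ ≤ r) :
    ‖Complex.exp (L z) • c‖ ≤ Real.exp (r * ‖L‖) * ‖c‖ := by
  rw [norm_smul, mul_comm r]
  gcongr
  exact (Complex.norm_exp_le_exp_norm _).trans (Real.exp_le_exp.2 (L.le_opNorm_of_le hz))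

variable [CompleteSpace F] {L : ι → E →L[ℂ] ℂ} {c : ι → F}

theorem analyticOnNhd_tsum_exp_smul
    (h : ∀ r : NNReal, Summable fun n => Real.exp (r * ‖L n‖) * ‖c n‖) :
    AnalyticOnNhd ℂ (fun z => ∑' n, Complex.exp (L n z) • c n) Set.univ := by
  intro z _
  have hr : 0 < ‖z‖₊ + 1 := by positivity
  have h_series := hasFPowerSeriesOnBall_tsum hr
    (fun n => (hasFPowerSeriesOnBall_exp_smul (L n) (c n)).mono (ENNReal.coe_pos.2 hr) le_top)
    (h _) fun n => norm_expSMulSeries_mul_pow_le (L n) (c n) _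
  refine h_series.analyticAt_of_mem ?_
  rw [mem_eball_zero_iff]
  exact ENNReal.coe_lt_coe.2 (lt_add_one _)

theorem tendstoUniformlyOn_tsum_exp_smul
    (h : ∀ r : NNReal, Summable fun n => Real.exp (r * ‖L n‖) * ‖c n‖)
    {K : Set E} (hK : Bornology.IsBounded K) :
    TendstoUniformlyOn (fun (s : Finset ι) z => ∑ n ∈ s, Complex.exp (L n z) • c n)
      (fun z => ∑' n, Complex.exp (L n z) • c n) atTop K := by
  obtain ⟨r, hr_pos, hr⟩ := hK.exists_pos_norm_le
  lift r to NNReal using hr_pos.le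
  exact tendstoUniformlyOn_tsum (h r) fun n z hz => norm_exp_smul_le (L n) (c n) (hr z hz)

end ExponentialSeries

section GaussianSummability

variable {ι : Type*} [Fintype ι]

lemma summable_pi_prod {κ : ι → Type*} {f : ∀ i, κ i → ℝ} (hf_nonneg : ∀ i, 0 ≤ f i)
    (hf : ∀ i, Summable (f i)) : Summable fun n : ∀ i, κ i => ∏ i, f i (n i) := by
  classical
  refine summable_of_sum_le (c := ∏ i, ∑' m, f i m)
    (fun n => Finset.prod_nonneg fun i _ => hf_nonneg i (n i)) fun s => ?_
  let box : ∀ i, Finset (κ i) := fun i => s.image (· i)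
  have h_sub : s ⊆ Fintype.piFinset box := fun n hn =>
    Fintype.mem_piFinset.2 fun i => Finset.mem_image_of_mem (· i) hn
  calc ∑ n ∈ s, ∏ i, f i (n i)
      ≤ ∑ n ∈ Fintype.piFinset box, ∏ i, f i (n i) :=
        Finset.sum_le_sum_of_subset_of_nonneg h_sub fun n _ _ =>
          Finset.prod_nonneg fun i _ => hf_nonneg i (n i)
    _ = ∏ i, ∑ m ∈ box i, f i m := (Finset.prod_univ_sum box f).symm
    _ ≤ ∏ i, ∑' m, f i m :=
        Finset.prod_le_prod (fun i _ => Finset.sum_nonneg fun m _ => hf_nonneg i m) fun i _ =>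
          (hf i).sum_le_tsum _ fun m _ => hf_nonneg i m

lemma summable_int_exp_mul_abs_sub_mul_sq (r : ℝ) {a : ℝ} (ha : 0 < a) :
    Summable fun m : ℤ => Real.exp (r * |(m : ℝ)| - a * (m : ℝ) ^ 2) := by
  refine (summable_pow_mul_jacobiTheta₂_term_bound (r / (2 * Real.pi))
    (div_pos ha Real.pi_pos) 0).congr fun m => ?_
  rw [pow_zero, one_mul, Int.cast_abs]
  congr 1
  field_simp
  ring

lemma summable_exp_mul_sum_abs_sub_mul_sum_sq (r : ℝ) {a : ℝ} (ha : 0 < a) :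
    Summable fun n : ι → ℤ =>
      Real.exp (r * ∑ i, |(n i : ℝ)| - a * ∑ i, (n i : ℝ) ^ 2) := by
  refine (summable_pi_prod (fun _ _ => (Real.exp_pos _).le) fun _ : ι =>
    summable_int_exp_mul_abs_sub_mul_sq r ha).congr fun n => ?_
  rw [← Real.exp_sum, Finset.sum_sub_distrib, Finset.mul_sum, Finset.mul_sum]

end GaussianSummability

section DotProduct

variable {ι 𝕜 : Type*} [Fintype ι] [NontriviallyNormedField 𝕜]

/-- The dot product `z ↦ a ⬝ᵥ z` as a continuous linear form on `ι → 𝕜` with the sup norm. -/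
def dotProductCLM (a : ι → 𝕜) : (ι → 𝕜) →L[𝕜] 𝕜 :=
  ∑ i, a i • ContinuousLinearMap.proj i

lemma dotProductCLM_apply (a z : ι → 𝕜) : dotProductCLM a z = ∑ i, a i * z i := by
  simp [dotProductCLM]

lemma norm_dotProductCLM_le (a : ι → 𝕜) : ‖dotProductCLM a‖ ≤ ∑ i, ‖a i‖ := by
  refine ContinuousLinearMap.opNorm_le_bound _ (by positivity) fun z => ?_
  rw [dotProductCLM_apply, Finset.sum_mul]
  refine norm_sum_le_of_le _ fun i _ => ?_
  rw [norm_mul]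
  gcongr
  exact norm_le_pi_norm z i

end DotProduct

section Theta

variable {g : ℕ} (B : Matrix (Fin g) (Fin g) ℂ)

lemma thetaTerm_eq_exp_smul (n : Fin g → ℤ) (z : Fin g → ℂ) :
    thetaTerm B n z =
      Complex.exp (dotProductCLM (fun i => (n i : ℂ)) z) • thetaTerm B n 0 := by
  simp [thetaTerm, dotProductCLM_apply, Complex.exp_add, mul_comm]

lemma norm_thetaTerm_zero (n : Fin g → ℤ) :
    ‖thetaTerm B n 0‖ = Real.exp (1 / 2 * ∑ i, ∑ j, (B i j).re * n i * n j) := by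
  have h_re (i j : Fin g) : ((n i : ℂ) * B i j * (n j : ℂ)).re = (B i j).re * n i * n j := by
    simp [mul_comm]
  have h_half (w : ℂ) : (1 / 2 * w).re = 1 / 2 * w.re := by simp
  simp only [thetaTerm, Complex.norm_exp, Pi.zero_apply, mul_zero, Finset.sum_const_zero,
    add_zero, h_half, Complex.re_sum, h_re]

variable {B} {c : ℝ}

lemma summable_exp_mul_norm_thetaTerm_zero (hc : 0 < c)
    (hB : ∀ n : Fin g → ℝ, (∑ i, ∑ j, (B i j).re * n i * n j) ≤ -c * ∑ i, n i ^ 2) (r : NNReal) :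
    Summable fun n : Fin g → ℤ =>
      Real.exp (r * ‖dotProductCLM fun i => (n i : ℂ)‖) * ‖thetaTerm B n 0‖ := by
  refine (summable_exp_mul_sum_abs_sub_mul_sum_sq r (half_pos hc)).of_nonneg_of_le
    (fun n => by positivity) fun n => ?_
  have h_norm : ‖dotProductCLM fun i => (n i : ℂ)‖ ≤ ∑ i, |(n i : ℝ)| := by
    simpa only [Complex.norm_intCast] using norm_dotProductCLM_le fun i => (n i : ℂ)
  have h_linear := mul_le_mul_of_nonneg_left h_norm r.coe_nonneg
  have h_quadratic := hB fun i => (n i : ℝ)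
  rw [norm_thetaTerm_zero, ← Real.exp_add, Real.exp_le_exp]
  linarith

end Theta

/-- If `g ≥ 1` and `B` is a complex `g × g` matrix whose real part is
negative definite as a quadratic form on `ℝ^g`, then `z ↦ θ(z, B)` is analytic on all of
`ℂ^g`; in particular the defining series converges uniformly on compact subsets of `ℂ^g`. -/
theorem stmt_2 (g : ℕ) (hg : 1 ≤ g) (B : Matrix (Fin g) (Fin g) ℂ)
    (hB : ∃ c : ℝ, 0 < c ∧ ∀ n : Fin g → ℝ,
      (∑ i, ∑ j, (B i j).re * n i * n j) ≤ -c * (∑ i, n i ^ 2)) :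
    AnalyticOnNhd ℂ (riemannTheta B) Set.univ ∧
      ∀ K : Set (Fin g → ℂ), IsCompact K →
        TendstoUniformlyOn
          (fun (s : Finset (Fin g → ℤ)) (z : Fin g → ℂ) => ∑ n ∈ s, thetaTerm B n z)
          (riemannTheta B) atTop K := by
  obtain ⟨c, hc, hB⟩ := hB
  have h_summable := summable_exp_mul_norm_thetaTerm_zero hc hB
  have h_analytic := analyticOnNhd_tsum_exp_smul h_summable
  have h_uniform {K : Set (Fin g → ℂ)} (hK : IsCompact K) :=
    tendstoUniformlyOn_tsum_exp_smul h_summable hK.isBounded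
  simp only [← thetaTerm_eq_exp_smul] at h_analytic h_uniform
  exact ⟨h_analytic, fun _ hK => h_uniform hK⟩
end

section
/- Fix an integer g ≥ 1 and real numbers 0 < κ₁ < κ₂ < ⋯ < κ_{2g}. Then there exists exactly one holomorphic function ξ : ℂ ∖ iΓ → ℂ such that ξ(k)⁴ = Π_{j=1}^{g} (k² + κ_{2j−1}²)/(k² + κ_{2j}²) for all k ∈ ℂ ∖ iΓ and ξ(k) → 1 as |k| → ∞. -/
open Filter

/-- The set `Γ = ⋃_{j=1}^{g} ([−κ_{2j}, −κ_{2j−1}] ∪ [κ_{2j−1}, κ_{2j}]) ⊂ ℝ`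
(here indexed by `j ∈ {0, …, g-1}`, so the `j`-th piece uses `κ (2j+1)` and `κ (2j+2)`). -/
def Gam (g : ℕ) (κ : ℕ → ℝ) : Set ℝ :=
  ⋃ j ∈ Finset.range g,
    (Set.Icc (-(κ (2 * j + 2))) (-(κ (2 * j + 1))) ∪
      Set.Icc (κ (2 * j + 1)) (κ (2 * j + 2)))

/-- The set `iΓ = {i k : k ∈ Γ} ⊂ ℂ`. -/
def iGam (g : ℕ) (κ : ℕ → ℝ) : Set ℂ :=
  (fun s : ℝ => Complex.I * (s : ℂ)) '' Gam g κ

/-- The defining properties of `ξ`: holomorphic on `ℂ ∖ iΓ`, a fourth root of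
`Π_{j=1}^{g} (k² + κ_{2j−1}²)/(k² + κ_{2j}²)` there, and `ξ(k) → 1` as `|k| → ∞`. -/
def XiProp (g : ℕ) (κ : ℕ → ℝ) (ξ : ℂ → ℂ) : Prop :=
  DifferentiableOn ℂ ξ (iGam g κ)ᶜ ∧
    (∀ k ∈ (iGam g κ)ᶜ,
      ξ k ^ 4 = ∏ j ∈ Finset.range g,
        (k ^ 2 + ((κ (2 * j + 1) : ℂ)) ^ 2) / (k ^ 2 + ((κ (2 * j + 2) : ℂ)) ^ 2)) ∧
    Tendsto ξ (Bornology.cobounded ℂ) (nhds 1)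

/-!
The Möbius map `z ↦ (z + a²) / (z + b²)` sends the segment `[-b², -a²]` onto `[-∞, 0]`, so off `iΓ`
each factor of the product avoids the cut of the principal logarithm, and the product of the
principal fourth roots of the factors is the required function. Two such functions differ by a
continuous factor whose values are fourth roots of unity. The complement of `iΓ` is connected, since
`iΓ` is a proper subset of a line, and it contains a neighbourhood of `∞`, where the factor tends to
`1`; hence the factor is identically `1`.
-/

section

open Bornology Complex Set
open scoped Topology

section Connectedness

variable {E : Type*} [AddCommGroup E] [Module ℝ E] [TopologicalSpace E] [IsTopologicalAddGroup E]
  [ContinuousSMul ℝ E] {ℓ : E →L[ℝ] ℝ} {S : Set E}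

lemma isPreconnected_of_between_halfSpaces (hℓ : ℓ ≠ 0) (h_open : {x | 0 < ℓ x} ⊆ S)
    (h_closed : S ⊆ {x | 0 ≤ ℓ x}) : IsPreconnected S := by
  have h_convex : Convex ℝ {x | 0 < ℓ x} := convex_halfSpace_gt ℓ.isLinear 0
  have h_closure : closure {x | 0 < ℓ x} = {x | 0 ≤ ℓ x} := by
    have := (ℓ.isOpenMap_of_ne_zero hℓ).preimage_closure_eq_closure_preimage ℓ.continuous (Ioi 0)
    rw [closure_Ioi] at this
    exact this.symm
  exact h_convex.isPreconnected.subset_closure h_open (h_closure ▸ h_closed)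

lemma isPreconnected_compl_of_ssubset_hyperplane (hℓ : ℓ ≠ 0) (hS : S ⊂ {x | ℓ x = 0}) :
    IsPreconnected Sᶜ := by
  obtain ⟨x, hx, hxS⟩ := exists_of_ssubset hS
  have h_right : IsPreconnected (Sᶜ ∩ {y | 0 ≤ ℓ y}) :=
    isPreconnected_of_between_halfSpaces hℓ
      (fun y (hy : 0 < ℓ y) => ⟨fun hyS => hy.ne' (hS.subset hyS), hy.le⟩)
      inter_subset_right
  have h_left : IsPreconnected (Sᶜ ∩ {y | ℓ y ≤ 0}) :=
    isPreconnected_of_between_halfSpaces (neg_ne_zero.2 hℓ)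
      (fun y (hy : 0 < -ℓ y) =>
        ⟨fun hyS => (neg_pos.1 hy).ne (hS.subset hyS), (neg_pos.1 hy).le⟩)
      (fun y hy => show 0 ≤ -ℓ y from neg_nonneg.2 hy.2)
  have h_cover : Sᶜ ∩ {y | 0 ≤ ℓ y} ∪ Sᶜ ∩ {y | ℓ y ≤ 0} = Sᶜ := by
    rw [← inter_union_distrib_left, inter_eq_left]
    exact fun y _ => le_total 0 (ℓ y)
  exact h_cover ▸ h_right.union x ⟨hxS, hx.ge⟩ ⟨hxS, hx.le⟩ h_left

end Connectedness

lemma eqOn_of_pow_eq_of_tendsto {X 𝕜 : Type*} [TopologicalSpace X] [Field 𝕜] [TopologicalSpace 𝕜]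
    [ContinuousMul 𝕜] [ContinuousInv₀ 𝕜] [T2Space 𝕜] {n : ℕ} {S : Set X} {f g : X → 𝕜}
    {l : Filter X} [l.NeBot] {c : 𝕜} (hn : n ≠ 0) (hS : IsPreconnected S) (hSl : S ∈ l)
    (hf : ContinuousOn f S) (hg : ContinuousOn g S) (h_pow : EqOn (f ^ n) (g ^ n) S)
    (hg_ne : ∀ x ∈ S, g x ≠ 0) (hfl : Tendsto f l (𝓝 c)) (hgl : Tendsto g l (𝓝 c))
    (hc : c ≠ 0) : EqOn f g S := by
  intro x hx
  have h_root : MapsTo (f / g) S (Polynomial.nthRootsFinset n (1 : 𝕜) : Set 𝕜) := fun y hy => by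
    rw [Finset.mem_coe, Polynomial.mem_nthRootsFinset hn.bot_lt, Pi.div_apply, div_pow]
    exact (div_eq_one_iff_eq (pow_ne_zero n (hg_ne y hy))).2 (h_pow hy)
  have h_const : ∀ᶠ y in l, (f / g) y = (f / g) x := mem_of_superset hSl fun y hy =>
    hS.constant_of_mapsTo (Finset.finite_toSet _).isDiscrete (hf.div hg hg_ne) h_root hy hx
  have h_lim : Tendsto (f / g) l (𝓝 1) := div_self hc ▸ hfl.div hgl hc
  have h_one : f x / g x = 1 :=
    tendsto_nhds_unique (tendsto_const_nhds.congr' (h_const.mono fun _ => Eq.symm)) h_lim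
  exact (div_eq_one_iff_eq (hg_ne x hx)).1 h_one

/-- `ξ` is a holomorphic branch on `U` of the `n`-th root of `R`, normalized by `ξ → 1` at `∞`.
Values of `ξ` outside `U` matter only through the limit. -/
structure IsNormalizedRoot (n : ℕ) (R : ℂ → ℂ) (U : Set ℂ) (ξ : ℂ → ℂ) : Prop where
  differentiableOn : DifferentiableOn ℂ ξ U
  pow_eq : ∀ k ∈ U, ξ k ^ n = R k
  tendsto_one : Tendsto ξ (cobounded ℂ) (𝓝 1)

namespace IsNormalizedRoot

variable {n : ℕ} {U : Set ℂ}

lemma cpow_inv {R : ℂ → ℂ} (hn : n ≠ 0) (hR : DifferentiableOn ℂ R U)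
    (h_slit : MapsTo R U slitPlane) (h_lim : Tendsto R (cobounded ℂ) (𝓝 1)) :
    IsNormalizedRoot n R U (fun k => R k ^ (n⁻¹ : ℂ)) where
  differentiableOn := hR.cpow (differentiableOn_const _) h_slit
  pow_eq _ _ := cpow_nat_inv_pow _ hn
  tendsto_one := by
    simpa only [one_cpow] using h_lim.cpow tendsto_const_nhds one_mem_slitPlane

lemma prod {ι : Type*} {s : Finset ι} {R ξ : ι → ℂ → ℂ}
    (h : ∀ j ∈ s, IsNormalizedRoot n (R j) U (ξ j)) :
    IsNormalizedRoot n (fun k => ∏ j ∈ s, R j k) U (fun k => ∏ j ∈ s, ξ j k) where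
  differentiableOn := DifferentiableOn.fun_finsetProd fun j hj => (h j hj).differentiableOn
  pow_eq k hk := by
    rw [← Finset.prod_pow]
    exact Finset.prod_congr rfl fun j hj => (h j hj).pow_eq k hk
  tendsto_one := by
    simpa only [Finset.prod_const_one] using tendsto_finsetProd s fun j hj => (h j hj).tendsto_one

lemma eqOn {R ξ ξ' : ℂ → ℂ} (hn : n ≠ 0) (hU : IsPreconnected U) (hU_inf : U ∈ cobounded ℂ)
    (hR : ∀ k ∈ U, R k ≠ 0) (h : IsNormalizedRoot n R U ξ) (h' : IsNormalizedRoot n R U ξ') :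
    EqOn ξ ξ' U :=
  eqOn_of_pow_eq_of_tendsto hn hU hU_inf h.differentiableOn.continuousOn
    h'.differentiableOn.continuousOn (fun k hk => (h.pow_eq k hk).trans (h'.pow_eq k hk).symm)
    (fun k hk hzero => hR k hk (by rw [← h'.pow_eq k hk, hzero, zero_pow hn]))
    h.tendsto_one h'.tendsto_one one_ne_zero

end IsNormalizedRoot

open scoped ComplexOrder in
lemma sub_div_sub_mem_slitPlane_iff {p q z : ℂ} :
    (z - p) / (z - q) ∈ slitPlane ↔ z ∉ segment ℝ p q := by
  rw [mem_slitPlane_iff_not_le_zero, mem_segment_iff_sameRay, sameRay_iff_arg_div_eq_zero,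
    arg_eq_zero_iff_zero_le, ← neg_sub z q, div_neg, neg_nonneg]

lemma tendsto_add_const_div_add_const_cobounded {𝕜 : Type*} [NormedField 𝕜] (c d : 𝕜) :
    Tendsto (fun z => (z + c) / (z + d)) (cobounded 𝕜) (𝓝 1) := by
  have h_lim : Tendsto (fun z => 1 + (c - d) * (z + d)⁻¹) (cobounded 𝕜) (𝓝 (1 + (c - d) * 0)) :=
    ((tendsto_inv₀_cobounded.comp (tendsto_add_const_cobounded d)).const_mul _).const_add _
  rw [mul_zero, add_zero] at h_lim
  refine h_lim.congr' ?_
  filter_upwards [eventually_ne_cobounded (-d)] with z hz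
  have : z + d ≠ 0 := fun h => hz (eq_neg_of_add_eq_zero_left h)
  field_simp
  ring

lemma exists_I_mul_eq_of_sq_mem_segment {a b : ℝ} (ha : 0 ≤ a) (hab : a ≤ b) {k : ℂ}
    (hk : k ^ 2 ∈ segment ℝ (-(a : ℂ) ^ 2) (-(b : ℂ) ^ 2)) :
    ∃ x ∈ Icc (-b) (-a) ∪ Icc a b, I * (x : ℂ) = k := by
  obtain ⟨u, v, hu, hv, huv, h_comb⟩ := hk
  set r := u * a ^ 2 + v * b ^ 2
  have hr : r ∈ Icc (a ^ 2) (b ^ 2) :=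
    have h_le : a ^ 2 ≤ b ^ 2 := pow_le_pow_left₀ ha hab 2
    convex_Icc _ _ (left_mem_Icc.2 h_le) (right_mem_Icc.2 h_le) hu hv huv
  have ha_sqrt : a ≤ √r := Real.le_sqrt_of_sq_le hr.1
  have hb_sqrt : √r ≤ b := Real.sqrt_le_iff.2 ⟨ha.trans hab, hr.2⟩
  have h_sq : k ^ 2 = (I * (√r : ℝ)) ^ 2 := by
    rw [mul_pow, I_sq, ← ofReal_pow, Real.sq_sqrt ((sq_nonneg a).trans hr.1), ← h_comb]
    simp only [r, real_smul, ofReal_add, ofReal_mul, ofReal_pow]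
    ring
  rcases sq_eq_sq_iff_eq_or_eq_neg.1 h_sq with h_eq | h_eq
  · exact ⟨√r, .inr ⟨ha_sqrt, hb_sqrt⟩, h_eq.symm⟩
  · exact ⟨-√r, .inl ⟨neg_le_neg hb_sqrt, neg_le_neg ha_sqrt⟩, by rw [h_eq, ofReal_neg, mul_neg]⟩

section Slits

variable {ι : Type*} (s : Finset ι) (a b : ι → ℝ)

/-- The union of the slits `±i[a j, b j]`, `j ∈ s`, on the imaginary axis: the analogue of `iΓ`
for a finite family of intervals, in no particular order and possibly overlapping. -/
def imaginarySlits : Set ℂ :=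
  (fun x : ℝ => I * (x : ℂ)) '' ⋃ j ∈ s, (Icc (-b j) (-a j) ∪ Icc (a j) (b j))

lemma isCompact_biUnion_Icc_neg_union_Icc :
    IsCompact (⋃ j ∈ s, (Icc (-b j) (-a j) ∪ Icc (a j) (b j))) :=
  s.isCompact_biUnion fun _ _ => isCompact_Icc.union isCompact_Icc

lemma compl_imaginarySlits_mem_cobounded : (imaginarySlits s a b)ᶜ ∈ cobounded ℂ :=
  ((isCompact_biUnion_Icc_neg_union_Icc s a b).image (by fun_prop)).isBounded

lemma isPreconnected_compl_imaginarySlits : IsPreconnected (imaginarySlits s a b)ᶜ := by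
  have h_re : reCLM ≠ 0 := fun h => one_ne_zero (α := ℝ) (DFunLike.congr_fun h (1 : ℂ))
  refine isPreconnected_compl_of_ssubset_hyperplane h_re ⟨?_, fun h_axis => ?_⟩
  · rintro _ ⟨x, -, rfl⟩
    simp
  · refine (isCompact_biUnion_Icc_neg_union_Icc s a b).ne_univ (eq_univ_of_forall fun x => ?_)
    have h_mem : I * (x : ℂ) ∈ {z | reCLM z = 0} := by simp
    obtain ⟨y, hy, h_eq⟩ := h_axis h_mem
    rwa [← ofReal_injective (mul_left_cancel₀ I_ne_zero h_eq)]

variable {s a b} {j : ι}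

lemma sq_add_sq_div_sq_add_sq_mem_slitPlane (hj : j ∈ s) (ha : 0 ≤ a j) (hab : a j ≤ b j)
    {k : ℂ} (hk : k ∉ imaginarySlits s a b) :
    (k ^ 2 + (a j : ℂ) ^ 2) / (k ^ 2 + (b j : ℂ) ^ 2) ∈ slitPlane := by
  rw [← sub_neg_eq_add, ← sub_neg_eq_add (k ^ 2), sub_div_sub_mem_slitPlane_iff]
  intro h_seg
  obtain ⟨x, hx, rfl⟩ := exists_I_mul_eq_of_sq_mem_segment ha hab h_seg
  exact hk ⟨x, mem_biUnion hj hx, rfl⟩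

lemma isNormalizedRoot_cpow_inv_of_mem {n : ℕ} (hn : n ≠ 0) (hj : j ∈ s) (ha : 0 ≤ a j)
    (hab : a j ≤ b j) :
    IsNormalizedRoot n (fun k => (k ^ 2 + (a j : ℂ) ^ 2) / (k ^ 2 + (b j : ℂ) ^ 2))
      (imaginarySlits s a b)ᶜ
      (fun k => ((k ^ 2 + (a j : ℂ) ^ 2) / (k ^ 2 + (b j : ℂ) ^ 2)) ^ (n⁻¹ : ℂ)) := by
  have h_slit : MapsTo (fun k => (k ^ 2 + (a j : ℂ) ^ 2) / (k ^ 2 + (b j : ℂ) ^ 2))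
      (imaginarySlits s a b)ᶜ slitPlane :=
    fun k hk => sq_add_sq_div_sq_add_sq_mem_slitPlane hj ha hab hk
  refine .cpow_inv hn (fun k hk => ?_) h_slit
    ((tendsto_add_const_div_add_const_cobounded _ _).comp
      (tendsto_pow_cobounded_cobounded two_ne_zero))
  have h_den : k ^ 2 + (b j : ℂ) ^ 2 ≠ 0 :=
    (div_ne_zero_iff.1 (slitPlane_ne_zero (h_slit hk))).2
  fun_prop (disch := exact h_den)

theorem stmt_3_general {n : ℕ} (hn : n ≠ 0) (ha : ∀ j ∈ s, 0 ≤ a j) (hab : ∀ j ∈ s, a j ≤ b j) :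
    let R : ℂ → ℂ := fun k => ∏ j ∈ s, (k ^ 2 + (a j : ℂ) ^ 2) / (k ^ 2 + (b j : ℂ) ^ 2)
    ∃ ξ : ℂ → ℂ, IsNormalizedRoot n R (imaginarySlits s a b)ᶜ ξ ∧
      ∀ ξ' : ℂ → ℂ, IsNormalizedRoot n R (imaginarySlits s a b)ᶜ ξ' →
        EqOn ξ' ξ (imaginarySlits s a b)ᶜ := by
  intro R
  have hR : ∀ k ∈ (imaginarySlits s a b)ᶜ, R k ≠ 0 := fun k hk =>
    Finset.prod_ne_zero_iff.2 fun j hj => slitPlane_ne_zero <|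
      sq_add_sq_div_sq_add_sq_mem_slitPlane hj (ha j hj) (hab j hj) hk
  have h_root := IsNormalizedRoot.prod fun j hj =>
    isNormalizedRoot_cpow_inv_of_mem hn hj (ha j hj) (hab j hj)
  exact ⟨_, h_root, fun ξ' h' => h'.eqOn hn (isPreconnected_compl_imaginarySlits s a b)
    (compl_imaginarySlits_mem_cobounded s a b) hR h_root⟩

end Slits

lemma xiProp_iff_isNormalizedRoot {g : ℕ} {κ : ℕ → ℝ} {ξ : ℂ → ℂ} :
    XiProp g κ ξ ↔ IsNormalizedRoot 4
      (fun k => ∏ j ∈ Finset.range g,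
        (k ^ 2 + (κ (2 * j + 1) : ℂ) ^ 2) / (k ^ 2 + (κ (2 * j + 2) : ℂ) ^ 2))
      (imaginarySlits (Finset.range g) (fun j => κ (2 * j + 1)) (fun j => κ (2 * j + 2)))ᶜ ξ :=
  ⟨fun ⟨hd, hp, ht⟩ => ⟨hd, hp, ht⟩, fun ⟨hd, hp, ht⟩ => ⟨hd, hp, ht⟩⟩

lemma pos_of_one_pos_of_lt_succ {α : Type*} [Zero α] [Preorder α] {u : ℕ → α} {N : ℕ}
    (h_one : 0 < u 1) (h_lt : ∀ i, 1 ≤ i → i + 1 ≤ N → u i < u (i + 1)) {i : ℕ} (hi : 1 ≤ i)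
    (hiN : i ≤ N) : 0 < u i := by
  induction i, hi using Nat.le_induction with
  | base => exact h_one
  | succ i hi ih => exact (ih (Nat.le_of_succ_le hiN)).trans (h_lt i hi hiN)

end

/-- For `0 < κ₁ < ⋯ < κ_{2g}` there is exactly one holomorphic function
`ξ : ℂ ∖ iΓ → ℂ` with `ξ(k)⁴ = Π_{j=1}^{g} (k² + κ_{2j−1}²)/(k² + κ_{2j}²)` on `ℂ ∖ iΓ`
and `ξ(k) → 1` as `|k| → ∞` (uniqueness as functions on `ℂ ∖ iΓ`). -/
theorem stmt_3 (g : ℕ) (hg : 1 ≤ g) (κ : ℕ → ℝ) (h0 : 0 < κ 1)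
    (hmono : ∀ i, 1 ≤ i → i + 1 ≤ 2 * g → κ i < κ (i + 1)) :
    ∃ ξ : ℂ → ℂ, XiProp g κ ξ ∧
      ∀ ξ' : ℂ → ℂ, XiProp g κ ξ' → Set.EqOn ξ' ξ (iGam g κ)ᶜ := by
  simp only [xiProp_iff_isNormalizedRoot]
  exact stmt_3_general four_ne_zero
    (fun j hj => (pos_of_one_pos_of_lt_succ h0 hmono (by lia) (by grind)).le)
    (fun j hj => (hmono (2 * j + 1) (by lia) (by grind)).le)
end
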